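/- For n = 2, define q(m,t) as follows: q = 1 - (m/t)² if 4/5 ≤ t ≤ 1 and m₁(t) ≤ m ≤ t²; q = (1-m)²/(1-t²) if 4/5 ≤ t < 1 and t² < m; q = 1 - ((m+1-t)/(2-t))² if 1 ≤ t < 2 and 5m > 2t+1; q = ((1-m)/(1-t/2))² otherwise (with m₁ as in the paper). Then for any probability measure μ on [0,1] with mean m and X₁, X₂ i.i.d. with law μ, one has P(X₁ + X₂ ≤ t) ≤ q(m,t), i.e., p(m,t) = q(m,t) for all 0 ≤ t < 2m, 0 < m < 1. -/

import Mathlib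

open MeasureTheory

/-- The boundary curve `m₁(t)` between the `{t/2,1}` and `{0,t}` solutions. -/
noncomputable def mOne (t : ℝ) : ℝ :=
  (4 * t ^ 2 - (2 - t) * t * Real.sqrt (t * (5 * t - 4))) / (5 * t ^ 2 - 4 * t + 4)

/-- The conjectured/proved value `q(m,t)` of `p(m,t)` for `n = 2`, from the solution
table of the paper. -/
noncomputable def qVal (m t : ℝ) : ℝ :=
  if 4 / 5 ≤ t ∧ t ≤ 1 ∧ mOne t ≤ m ∧ m ≤ t ^ 2 then 1 - (m / t) ^ 2
  else if 4 / 5 ≤ t ∧ t < 1 ∧ t ^ 2 < m then (1 - m) ^ 2 / (1 - t ^ 2)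
  else if 1 ≤ t ∧ t < 2 ∧ 2 * t + 1 < 5 * m then 1 - ((m + 1 - t) / (2 - t)) ^ 2
  else ((1 - m) / (1 - t / 2)) ^ 2

/-- `pSup2 m t = sup_{μ ∈ D_m} P_μ(X₁ + X₂ ≤ t)`. -/
noncomputable def pSup2 (m t : ℝ) : ENNReal :=
  ⨆ (μ : Measure ℝ) (_ : IsProbabilityMeasure μ ∧ μ (Set.Icc (0:ℝ) 1)ᶜ = 0 ∧
      (∫ x, x ∂μ) = m),
    (μ.prod μ) {p : ℝ × ℝ | p.1 + p.2 ≤ t}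

lemma alg_core (A B C σ d : ℝ) (hA : 0 ≤ A) (hB : 0 ≤ B) (hC : 0 ≤ C) (hs : A + B + C = σ)
    (hd : 0 ≤ d) (h : d ≤ C - A) :
    (A + B) ^ 2 + 2 * A * C ≤ (σ - d) ^ 2 ∨
      (A + B) ^ 2 + 2 * A * C ≤ σ ^ 2 - ((σ + d) / 2) ^ 2 := by
  have hAB : A + B = σ - C := by linarith
  rw [hAB]
  by_cases hc : C ≤ (σ + d) / 2
  · have h1 : A * C ≤ (C - d) * C := mul_le_mul_of_nonneg_right (by linarith) hC
    by_cases h3 : (σ + d) / 2 ≤ 3 * C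
    · right
      nlinarith [mul_nonneg (sub_nonneg.2 hc) (sub_nonneg.2 h3)]
    · left
      push Not at h3
      have hdC : 0 ≤ C - d := by linarith
      have : 0 ≤ 2 * (σ + d) - 3 * (C + d) := by linarith
      nlinarith [mul_nonneg hdC this]
  · right
    push Not at hc
    have h1 : A * C ≤ (σ - C) * C := mul_le_mul_of_nonneg_right (by linarith) hC
    have : ((σ + d) / 2) ^ 2 ≤ C ^ 2 := pow_le_pow_left₀ (by linarith) hc.le 2
    nlinarith

/-- Optimisation for `t ≥ 1`. -/
lemma alg_big (m t A B C : ℝ) (hm1 : m < 1) (ht1 : 1 ≤ t) (ht : t < 2 * m)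
    (hA : 0 ≤ A) (hB : 0 ≤ B) (hC : 0 ≤ C) (hs : A + B + C = 1)
    (h : m - t / 2 ≤ (1 - t / 2) * (C - A)) :
    (2 * t + 1 ≤ 5 * m → (A + B) ^ 2 + 2 * A * C ≤ 1 - ((m + 1 - t) / (2 - t)) ^ 2) ∧
    (5 * m ≤ 2 * t + 1 → (A + B) ^ 2 + 2 * A * C ≤ ((1 - m) / (1 - t / 2)) ^ 2) := by
  have hw : 0 < 1 - t / 2 := by linarith
  have hw2 : 0 < 2 - t := by linarith
  obtain ⟨d, hd⟩ : ∃ d, d = (m - t / 2) / (1 - t / 2) := ⟨_, rfl⟩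
  have e1 : (m + 1 - t) / (2 - t) = (1 + d) / 2 := by
    rw [hd]; field_simp; ring
  have e2 : (1 - m) / (1 - t / 2) = 1 - d := by
    rw [hd]; field_simp; ring
  have hd0 : 0 ≤ d := by rw [hd]; apply div_nonneg <;> linarith
  have hd1 : d ≤ 1 := by rw [hd, div_le_one hw]; linarith
  have hdC : d ≤ C - A := by rw [hd, div_le_iff₀ hw]; linarith
  rw [e1, e2]
  constructor
  · intro h5
    have h15 : 1 / 5 ≤ d := by rw [hd, le_div_iff₀ hw]; linarith
    rcases alg_core A B C 1 d hA hB hC hs hd0 hdC with h' | h'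
    · nlinarith [mul_nonneg (sub_nonneg.2 h15) (sub_nonneg.2 hd1)]
    · linarith
  · intro h5
    have h15 : d ≤ 1 / 5 := by rw [hd, div_le_iff₀ hw]; linarith
    rcases alg_core A B C 1 d hA hB hC hs hd0 hdC with h' | h'
    · linarith
    · nlinarith [mul_nonneg (sub_nonneg.2 h15) (sub_nonneg.2 hd1)]

lemma alg_small_aux (m t A B C : ℝ) (hm1 : m < 1) (ht0 : 0 < t) (ht1 : t ≤ 1)
    (hA : 0 ≤ A) (hB : 0 ≤ B) (hC : 0 ≤ C) (hs : A + B + C ≤ 1)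
    (h : m - t / 2 ≤ t / 2 * (C - A) + (1 - t / 2) * (1 - (A + B + C))) :
    (A + B) ^ 2 + 2 * A * C ≤ ((1 - m) / (1 - t / 2)) ^ 2 ∨
    ∃ σ, σ ≤ 1 ∧ (A + B) ^ 2 + 2 * A * C ≤ σ ^ 2 - ((σ - (1 - m)) / t) ^ 2 := by
  have hw : 0 < 1 - t / 2 := by linarith
  obtain ⟨σ, hσ⟩ : ∃ σ, σ = A + B + C := ⟨_, rfl⟩
  obtain ⟨d, hd⟩ : ∃ d, d = (σ * (1 - t / 2) - (1 - m)) / (t / 2) := ⟨_, rfl⟩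
  have hdC : d ≤ C - A := by
    rw [hd, div_le_iff₀ (by linarith), hσ]; linarith
  rcases lt_or_ge d 0 with hd0 | hd0
  · left
    have h1 : σ ≤ (1 - m) / (1 - t / 2) := by
      rw [le_div_iff₀ hw]
      by_contra hcon
      push Not at hcon
      have : 0 ≤ d := by rw [hd]; apply div_nonneg <;> linarith
      linarith
    have h0 : 0 ≤ σ := by rw [hσ]; positivity
    have h2 : σ ^ 2 ≤ ((1 - m) / (1 - t / 2)) ^ 2 := pow_le_pow_left₀ h0 h1 2
    rw [hσ] at h2
    nlinarith [mul_nonneg hB hC, sq_nonneg C]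
  · rcases alg_core A B C σ d hA hB hC hσ.symm hd0 hdC with h' | h'
    · left
      have e : σ - d = ((1 - m) - σ * (1 - t)) / (t / 2) := by
        rw [hd]; field_simp; ring
      have hx : 1 - m ≤ σ * (1 - t / 2) := by
        by_contra hcon
        push Not at hcon
        have : d < 0 := by rw [hd]; apply div_neg_of_neg_of_pos <;> linarith
        linarith
      have h1 : σ - d ≤ (1 - m) / (1 - t / 2) := by
        rw [e, div_le_div_iff₀ (by linarith) hw]
        nlinarith [mul_nonneg (sub_nonneg.2 hx) (sub_nonneg.2 ht1)]
      have : (σ - d) ^ 2 ≤ ((1 - m) / (1 - t / 2)) ^ 2 := pow_le_pow_left₀ (by linarith) h1 2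
      linarith
    · right
      refine ⟨σ, by linarith, ?_⟩
      have e : (σ + d) / 2 = (σ - (1 - m)) / t := by
        rw [hd]; field_simp; ring
      rwa [e] at h'

lemma cmp_sq (t r : ℝ) (h45 : 4 / 5 ≤ t) (ht1 : t < 1) :
    (r / (1 - t / 2)) ^ 2 ≤ r ^ 2 / (1 - t ^ 2) := by
  rw [div_pow]
  have : 0 < 1 - t ^ 2 := by nlinarith
  apply div_le_div_of_nonneg_left (sq_nonneg r) this
  nlinarith

lemma cmp_sq' (t r : ℝ) (h0 : 0 < t) (h45 : t ≤ 4 / 5) :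
    r ^ 2 / (1 - t ^ 2) ≤ (r / (1 - t / 2)) ^ 2 := by
  rw [div_pow]
  have : 0 < 1 - t / 2 := by linarith
  apply div_le_div_of_nonneg_left (sq_nonneg r) (by positivity)
  nlinarith

lemma sig_le (t r σ : ℝ) (h0 : 0 < t) (h1 : t < 1) :
    σ ^ 2 - ((σ - r) / t) ^ 2 ≤ r ^ 2 / (1 - t ^ 2) := by
  have : 0 < 1 - t ^ 2 := by nlinarith
  have e : r ^ 2 / (1 - t ^ 2) - (σ ^ 2 - ((σ - r) / t) ^ 2)
      = (σ * (1 - t ^ 2) - r) ^ 2 / (t ^ 2 * (1 - t ^ 2)) := by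
    field_simp; ring
  have : 0 ≤ (σ * (1 - t ^ 2) - r) ^ 2 / (t ^ 2 * (1 - t ^ 2)) := by positivity
  linarith

lemma sig_le_one (t m σ : ℝ) (h0 : 0 < t) (h1 : t ≤ 1) (hm : m ≤ t ^ 2) (hσ : σ ≤ 1) :
    σ ^ 2 - ((σ - (1 - m)) / t) ^ 2 ≤ 1 - (m / t) ^ 2 := by
  have e : 1 - (m / t) ^ 2 - (σ ^ 2 - ((σ - (1 - m)) / t) ^ 2)
      = (1 - σ) * (2 * (t ^ 2 - m) + (1 - σ) * (1 - t ^ 2)) / t ^ 2 := by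
    field_simp; ring
  have : 0 ≤ (1 - σ) * (2 * (t ^ 2 - m) + (1 - σ) * (1 - t ^ 2)) / t ^ 2 := by
    have : 0 ≤ 1 - t ^ 2 := by nlinarith
    have := sub_nonneg.2 hσ
    have := sub_nonneg.2 hm
    positivity
  linarith

lemma mOne_cmp (m t : ℝ) (h45 : 4 / 5 ≤ t) (h1 : t ≤ 1) (hm : m ≤ t ^ 2) :
    (mOne t ≤ m → ((1 - m) / (1 - t / 2)) ^ 2 ≤ 1 - (m / t) ^ 2) ∧
    (m < mOne t → 1 - (m / t) ^ 2 ≤ ((1 - m) / (1 - t / 2)) ^ 2) := by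
  obtain ⟨w, hw⟩ : ∃ w, w = Real.sqrt (t * (5 * t - 4)) := ⟨_, rfl⟩
  have hw0 : 0 ≤ w := by rw [hw]; positivity
  have hw2 : w ^ 2 = t * (5 * t - 4) := by
    rw [hw]; exact Real.sq_sqrt (mul_nonneg (by linarith) (by linarith))
  have hw1 : w ≤ 1 := by nlinarith
  have hK : 0 < 5 * t ^ 2 - 4 * t + 4 := by nlinarith
  have ht : 0 < t := by linarith
  have h2 : 0 < 2 - t := by linarith
  have e : ((1 - m) / (1 - t / 2)) ^ 2 - (1 - (m / t) ^ 2) =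
      (((5 * t ^ 2 - 4 * t + 4) * m - (4 * t ^ 2 - (2 - t) * t * w)) *
      ((5 * t ^ 2 - 4 * t + 4) * m - (4 * t ^ 2 + (2 - t) * t * w))) /
      ((5 * t ^ 2 - 4 * t + 4) * (t ^ 2 * (2 - t) ^ 2)) := by
    have : 1 - t / 2 = (2 - t) / 2 := by ring
    rw [this]
    rw [eq_div_iff (by positivity)]
    have x : (((5 * t ^ 2 - 4 * t + 4) * m - (4 * t ^ 2 - (2 - t) * t * w)) *
      ((5 * t ^ 2 - 4 * t + 4) * m - (4 * t ^ 2 + (2 - t) * t * w))) =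
      ((5 * t ^ 2 - 4 * t + 4) * m - 4 * t ^ 2) ^ 2 - (2 - t) ^ 2 * t ^ 2 * (t * (5 * t - 4)) := by
      rw [← hw2]; ring
    rw [x]
    field_simp
    ring
  have hup : (5 * t ^ 2 - 4 * t + 4) * m ≤ 4 * t ^ 2 + (2 - t) * t * w := by
    have a1 : (5 * t ^ 2 - 4 * t + 4) * m ≤ (5 * t ^ 2 - 4 * t + 4) * t ^ 2 :=
      mul_le_mul_of_nonneg_left hm hK.le
    have a2 : w * t ≤ 2 - t := by nlinarith
    have a3 : (w * t) * (w * t) ≤ (2 - t) * (w * t) :=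
      mul_le_mul_of_nonneg_right a2 (by positivity)
    nlinarith
  have hden : 0 < (5 * t ^ 2 - 4 * t + 4) * (t ^ 2 * (2 - t) ^ 2) := by positivity
  unfold mOne
  rw [← hw]
  constructor
  · intro h
    rw [div_le_iff₀ hK] at h
    rw [← sub_nonpos, e]
    apply div_nonpos_of_nonpos_of_nonneg _ hden.le
    apply mul_nonpos_of_nonneg_of_nonpos <;> linarith
  · intro h
    rw [lt_div_iff₀ hK] at h
    rw [← sub_nonneg, e]
    apply div_nonneg _ hden.le
    apply mul_nonneg_of_nonpos_of_nonpos <;> linarith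

/-- Optimisation for `0 < t ≤ 1`. -/
lemma alg_small (m t A B C : ℝ) (hm1 : m < 1) (ht0 : 0 < t) (ht1 : t ≤ 1)
    (hA : 0 ≤ A) (hB : 0 ≤ B) (hC : 0 ≤ C) (hs : A + B + C ≤ 1)
    (h : m - t / 2 ≤ t / 2 * (C - A) + (1 - t / 2) * (1 - (A + B + C))) :
    (t < 4 / 5 → (A + B) ^ 2 + 2 * A * C ≤ ((1 - m) / (1 - t / 2)) ^ 2) ∧
    (4 / 5 ≤ t → t < 1 → t ^ 2 < m → (A + B) ^ 2 + 2 * A * C ≤ (1 - m) ^ 2 / (1 - t ^ 2)) ∧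
    (4 / 5 ≤ t → m ≤ t ^ 2 → mOne t ≤ m → (A + B) ^ 2 + 2 * A * C ≤ 1 - (m / t) ^ 2) ∧
    (4 / 5 ≤ t → m ≤ t ^ 2 → m < mOne t →
      (A + B) ^ 2 + 2 * A * C ≤ ((1 - m) / (1 - t / 2)) ^ 2) := by
  have key := alg_small_aux m t A B C hm1 ht0 ht1 hA hB hC hs h
  refine ⟨fun h45 => ?_, fun h45 h1 hm => ?_, fun h45 hm hmo => ?_, fun h45 hm hmo => ?_⟩
  · rcases key with k | ⟨σ, hσ, k⟩
    · exact k
    · exact k.trans ((sig_le t _ σ ht0 (by linarith)).trans (cmp_sq' t _ ht0 h45.le))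
  · rcases key with k | ⟨σ, hσ, k⟩
    · exact k.trans (cmp_sq t _ h45 h1)
    · exact k.trans (sig_le t _ σ ht0 h1)
  · rcases key with k | ⟨σ, hσ, k⟩
    · exact k.trans ((mOne_cmp m t h45 ht1 hm).1 hmo)
    · exact k.trans (sig_le_one t m σ ht0 ht1 hm hσ)
  · rcases key with k | ⟨σ, hσ, k⟩
    · exact k
    · exact k.trans ((sig_le_one t m σ ht0 ht1 hm hσ).trans ((mOne_cmp m t h45 ht1 hm).2 hmo))

lemma mOne_one : mOne 1 = 3 / 5 := by
  unfold mOne; norm_num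

/-- Combined bound in terms of `qVal`. -/
lemma alg_q (m t A B C : ℝ) (hm1 : m < 1) (ht0 : 0 < t) (ht : t < 2 * m)
    (hA : 0 ≤ A) (hB : 0 ≤ B) (hC : 0 ≤ C) (hs : A + B + C ≤ 1)
    (h1 : t ≤ 1 → m - t / 2 ≤ t / 2 * (C - A) + (1 - t / 2) * (1 - (A + B + C)))
    (h2 : 1 < t → A + B + C = 1 ∧ m - t / 2 ≤ (1 - t / 2) * (C - A)) :
    (A + B) ^ 2 + 2 * A * C ≤ qVal m t := by
  unfold qVal
  rcases le_or_gt t 1 with hle | hgt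
  · obtain ⟨k1, k2, k3, k4⟩ := alg_small m t A B C hm1 ht0 hle hA hB hC hs (h1 hle)
    split_ifs with c1 c2 c3
    · exact k3 c1.1 c1.2.2.2 c1.2.2.1
    · exact k2 c2.1 c2.2.1 c2.2.2
    · exfalso
      have : t = 1 := le_antisymm hle c3.1
      subst this
      rw [mOne_one] at c1
      exact c1 ⟨by norm_num, le_rfl, by linarith, by linarith⟩
    · rcases lt_or_ge t (4 / 5) with h45 | h45
      · exact k1 h45
      · have hm : m ≤ t ^ 2 := by
          by_contra hcon
          push Not at hcon
          rcases hle.lt_or_eq with hlt | he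
          · exact c2 ⟨h45, hlt, hcon⟩
          · rw [he] at hcon; linarith
        apply k4 h45 hm
        by_contra hcon
        push Not at hcon
        exact c1 ⟨h45, hle, hcon, hm⟩
  · obtain ⟨e, h⟩ := h2 hgt
    obtain ⟨k1, k2⟩ := alg_big m t A B C hm1 hgt.le ht hA hB hC e h
    split_ifs with c1 c2 c3
    · linarith [c1.2.1]
    · linarith [c2.2.1]
    · exact k1 c3.2.2.le
    · apply k2
      by_contra hcon
      push Not at hcon
      exact c3 ⟨hgt.le, by linarith, hcon⟩

/-- Lower bound through three-point measures. -/
lemma three_pt (m t a b c x y z : ℝ) (ha : 0 ≤ a) (hb : 0 ≤ b) (hc : 0 ≤ c)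
    (hs : a + b + c = 1) (hx : x ∈ Set.Icc (0:ℝ) 1) (hy : y ∈ Set.Icc (0:ℝ) 1)
    (hz : z ∈ Set.Icc (0:ℝ) 1) (hm : a * x + b * y + c * z = m) :
    ENNReal.ofReal (
      a * (a * (if x + x ≤ t then 1 else 0) + b * (if x + y ≤ t then 1 else 0)
        + c * (if x + z ≤ t then 1 else 0)) +
      b * (a * (if y + x ≤ t then 1 else 0) + b * (if y + y ≤ t then 1 else 0)
        + c * (if y + z ≤ t then 1 else 0)) +
      c * (a * (if z + x ≤ t then 1 else 0) + b * (if z + y ≤ t then 1 else 0)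
        + c * (if z + z ≤ t then 1 else 0))) ≤ pSup2 m t := by
  obtain ⟨μ, hμ⟩ : ∃ μ : Measure ℝ, μ = ENNReal.ofReal a • Measure.dirac x +
    ENNReal.ofReal b • Measure.dirac y + ENNReal.ofReal c • Measure.dirac z := ⟨_, rfl⟩
  have hprob : IsProbabilityMeasure μ := by
    constructor
    rw [hμ]
    simp only [Measure.coe_add, Measure.coe_smul, Pi.add_apply, Pi.smul_apply, measure_univ,
      smul_eq_mul, mul_one]
    rw [← ENNReal.ofReal_add ha hb, ← ENNReal.ofReal_add (by positivity) hc, hs, ENNReal.ofReal_one]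
  have hsupp : μ (Set.Icc (0:ℝ) 1)ᶜ = 0 := by
    rw [hμ]
    simp only [Measure.coe_add, Measure.coe_smul, Pi.add_apply, Pi.smul_apply,
      smul_eq_mul]
    rw [Measure.dirac_apply' _ measurableSet_Icc.compl, Measure.dirac_apply' _ measurableSet_Icc.compl,
      Measure.dirac_apply' _ measurableSet_Icc.compl]
    simp [Set.indicator, hx.1, hx.2, hy.1, hy.2, hz.1, hz.2]
  have hintg : ∀ w : ℝ, ∀ p : ℝ, Integrable (fun x : ℝ => x) (ENNReal.ofReal w • Measure.dirac p) := by
    intro w p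
    apply Integrable.smul_measure _ ENNReal.ofReal_ne_top
    exact integrable_dirac (by simp)
  have hmean : (∫ x, x ∂μ) = m := by
    rw [hμ, integral_add_measure ((hintg a x).add_measure (hintg b y)) (hintg c z),
      integral_add_measure (hintg a x) (hintg b y)]
    simp only [integral_smul_measure, integral_dirac, ENNReal.toReal_ofReal ha,
      ENNReal.toReal_ofReal hb, ENNReal.toReal_ofReal hc, smul_eq_mul]
    exact hm
  have hE : MeasurableSet {p : ℝ × ℝ | p.1 + p.2 ≤ t} :=
    measurableSet_le (by fun_prop) (by fun_prop)
  have hpt : ∀ u : ℝ, μ (Prod.mk u ⁻¹' {p : ℝ × ℝ | p.1 + p.2 ≤ t}) =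
      ENNReal.ofReal (a * (if u + x ≤ t then 1 else 0) + b * (if u + y ≤ t then 1 else 0)
        + c * (if u + z ≤ t then 1 else 0)) := by
    intro u
    have hS := measurable_prodMk_left (x := u) hE
    rw [hμ]
    simp only [Measure.coe_add, Measure.coe_smul, Pi.add_apply, Pi.smul_apply,
      smul_eq_mul]
    rw [Measure.dirac_apply' _ hS, Measure.dirac_apply' _ hS, Measure.dirac_apply' _ hS]
    rw [ENNReal.ofReal_add (by positivity) (by positivity),
      ENNReal.ofReal_add (by positivity) (by positivity), ENNReal.ofReal_mul ha,
      ENNReal.ofReal_mul hb, ENNReal.ofReal_mul hc]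
    simp only [Set.indicator, Set.mem_preimage, Set.mem_ofPred_eq, Pi.one_apply]
    congr 1
    · congr 1
      · split_ifs <;> simp
      · split_ifs <;> simp
    · split_ifs <;> simp
  have hval : (μ.prod μ) {p : ℝ × ℝ | p.1 + p.2 ≤ t} = ENNReal.ofReal (
      a * (a * (if x + x ≤ t then 1 else 0) + b * (if x + y ≤ t then 1 else 0)
        + c * (if x + z ≤ t then 1 else 0)) +
      b * (a * (if y + x ≤ t then 1 else 0) + b * (if y + y ≤ t then 1 else 0)
        + c * (if y + z ≤ t then 1 else 0)) +
      c * (a * (if z + x ≤ t then 1 else 0) + b * (if z + y ≤ t then 1 else 0)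
        + c * (if z + z ≤ t then 1 else 0))) := by
    rw [Measure.prod_apply hE]
    simp only [hpt]
    rw [hμ]
    simp only [lintegral_add_measure, lintegral_smul_measure, lintegral_dirac, smul_eq_mul]
    rw [← ENNReal.ofReal_mul ha, ← ENNReal.ofReal_mul hb, ← ENNReal.ofReal_mul hc,
      ← ENNReal.ofReal_add (by positivity) (by positivity),
      ← ENNReal.ofReal_add (by positivity) (by positivity)]
  rw [← hval]
  unfold pSup2
  exact le_iSup₂_of_le μ ⟨hprob, hsupp, hmean⟩ le_rfl

lemma lower (m t : ℝ) (hm0 : 0 < m) (hm1 : m < 1) (ht0 : 0 ≤ t) (ht : t < 2 * m) :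
    ENNReal.ofReal (qVal m t) ≤ pSup2 m t := by
  unfold qVal
  split_ifs with c1 c2 c3
  · obtain ⟨h45, h1, -, hm⟩ := c1
    have ht' : 0 < t := by linarith
    have hmt : m / t ≤ 1 := by rw [div_le_one ht']; nlinarith
    have := three_pt m t (1 - m / t) (m / t) 0 0 t 0 (by linarith) (by positivity) le_rfl (by ring)
      (by simp) ⟨ht0, h1⟩ (by simp) (by field_simp; ring)
    refine le_trans (ENNReal.ofReal_le_ofReal (le_of_eq ?_)) this
    rw [if_pos (by linarith), if_pos (by linarith), if_pos (by linarith),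
      if_neg (by linarith)]
    ring
  · obtain ⟨h45, h1, hm⟩ := c2
    have hd : 0 < 1 - t ^ 2 := by nlinarith
    have hd1 : 0 < 1 - t := by linarith
    have hd2 : 0 < 1 + t := by linarith
    have hr : 0 < 1 - m := by linarith
    have hc : (1 - m) / (1 - t ^ 2) ≤ 1 := by rw [div_le_one hd]; linarith
    have hf : (1 - t ^ 2) = (1 - t) * (1 + t) := by ring
    have := three_pt m t ((1 - m) / (1 + t)) (t * (1 - m) / (1 - t ^ 2))
      (1 - (1 - m) / (1 - t ^ 2)) 0 t 1 (by positivity) (by positivity) (by linarith)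
      (by rw [hf]; field_simp; ring)
      (by simp) ⟨ht0, h1.le⟩ (by simp) (by rw [hf]; field_simp; ring)
    refine le_trans (ENNReal.ofReal_le_ofReal (le_of_eq ?_)) this
    rw [if_pos (by linarith), if_pos (by linarith), if_neg (by linarith),
      if_pos (by linarith), if_neg (by linarith), if_neg (by linarith), if_neg (by linarith),
      if_neg (by linarith), if_neg (by linarith)]
    rw [hf]; field_simp; ring
  · obtain ⟨h1, h2, h5⟩ := c3
    have hd : 0 < 2 - t := by linarith
    have hb : (m + 1 - t) / (2 - t) ≤ 1 := by rw [div_le_one hd]; linarith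
    have hb0 : 0 ≤ (m + 1 - t) / (2 - t) := div_nonneg (by linarith) hd.le
    have := three_pt m t (1 - (m + 1 - t) / (2 - t)) ((m + 1 - t) / (2 - t)) 0 (t - 1) 1 0
      (by linarith) hb0 le_rfl (by ring)
      ⟨by linarith, by linarith⟩ (by simp) (by simp) (by field_simp; ring)
    refine le_trans (ENNReal.ofReal_le_ofReal (le_of_eq ?_)) this
    rw [if_pos (by linarith), if_pos (by linarith), if_pos (by linarith)]
    rw [if_pos (by linarith), if_neg (by linarith)]
    ring
  · have hd : 0 < 1 - t / 2 := by linarith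
    have hb : (1 - m) / (1 - t / 2) ≤ 1 := by rw [div_le_one hd]; linarith
    have hb0 : 0 ≤ (1 - m) / (1 - t / 2) := div_nonneg (by linarith) hd.le
    have hd' : 2 - t ≠ 0 := by linarith
    have := three_pt m t ((1 - m) / (1 - t / 2)) (1 - (1 - m) / (1 - t / 2)) 0 (t / 2) 1 0
      hb0 (by linarith) le_rfl (by ring)
      ⟨by linarith, by linarith⟩ (by simp) (by simp) (by field_simp; ring)
    refine le_trans (ENNReal.ofReal_le_ofReal (le_of_eq ?_)) this
    rw [if_pos (by linarith), if_neg (by linarith)]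
    rw [if_neg (by linarith : ¬ (1 + t / 2 ≤ t)), if_neg (by linarith : ¬ ((1:ℝ) + 1 ≤ t))]
    ring

/-- The pairing kernel: `1` on `(c+s, c+V]`, `-1` on `(-∞, c-s)`. -/
noncomputable def ker (c V s x : ℝ) : ℝ :=
  (if c + s < x ∧ x ≤ c + V then 1 else 0) - (if x < c - s then 1 else 0)

lemma ker_meas (c V : ℝ) : Measurable (Function.uncurry (ker c V)) := by
  unfold ker Function.uncurry
  apply Measurable.sub
  · apply Measurable.ite _ measurable_const measurable_const
    have h1 : MeasurableSet {p : ℝ × ℝ | c + p.1 < p.2} :=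
      measurableSet_lt (by fun_prop) (by fun_prop)
    have h2 : MeasurableSet {p : ℝ × ℝ | p.2 ≤ c + V} :=
      measurableSet_le (by fun_prop) (by fun_prop)
    exact h1.inter h2
  · apply Measurable.ite _ measurable_const measurable_const
    exact measurableSet_lt (by fun_prop) (by fun_prop)

lemma ker_bdd (c V s x : ℝ) : ‖ker c V s x‖ ≤ 2 := by
  unfold ker
  split_ifs <;> norm_num

lemma ker_int (c V x : ℝ) (hV : 0 < V) (hx1 : x ≤ 1) :
    x - c ≤ (∫ s in Set.Ioc 0 V, ker c V s x) + (1 - c) * (if c + V < x then 1 else 0) := by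
  have key : ∀ u : ℝ, u ≤ V → (∫ s in Set.Ioc 0 V, (if s < u then (1:ℝ) else 0)) = max u 0 := by
    intro u hu
    have : (fun s : ℝ => if s < u then (1:ℝ) else 0) = (Set.Iio u).indicator (fun _ => (1:ℝ)) := by
      ext s; simp [Set.indicator]
    rw [this, setIntegral_indicator measurableSet_Iio]
    have hset : Set.Ioc 0 V ∩ Set.Iio u = Set.Ioo 0 u := by
      ext s; simp only [Set.mem_inter_iff, Set.mem_Ioc, Set.mem_Iio, Set.mem_Ioo]
      constructor
      · rintro ⟨⟨a, b⟩, c⟩; exact ⟨a, c⟩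
      · rintro ⟨a, b⟩; exact ⟨⟨a, by linarith⟩, b⟩
    rw [hset]
    simp [max_def]
  by_cases h1 : c + V < x
  · have : ∀ s ∈ Set.Ioc 0 V, ker c V s x = 0 := by
      intro s hs
      unfold ker
      rw [if_neg (by intro h; linarith [h.2]), if_neg (by linarith [hs.1])]; ring
    rw [setIntegral_congr_fun measurableSet_Ioc this]
    simp [h1]; linarith
  · push Not at h1
    rw [if_neg (not_lt.2 h1), mul_zero, add_zero]
    by_cases h2 : c ≤ x
    · have : ∀ s ∈ Set.Ioc 0 V, ker c V s x = if s < x - c then 1 else 0 := by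
        intro s hs
        unfold ker
        rw [if_neg (by linarith [hs.1] : ¬ x < c - s), sub_zero]
        congr 1
        apply propext
        constructor
        · intro h; linarith [h.1]
        · intro h; exact ⟨by linarith, h1⟩
      rw [setIntegral_congr_fun measurableSet_Ioc this, key _ (by linarith)]
      exact le_max_left _ _
    · push Not at h2
      by_cases h3 : c - V ≤ x
      · have : ∀ s ∈ Set.Ioc 0 V, ker c V s x = - (if s < c - x then 1 else 0) := by
          intro s hs
          unfold ker
          rw [if_neg (by intro h; linarith [h.1, hs.1])]
          rw [zero_sub]
          congr 2
          apply propext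
          constructor <;> intro h <;> linarith
        rw [setIntegral_congr_fun measurableSet_Ioc this, integral_neg, key _ (by linarith),
          max_eq_left (by linarith)]
        linarith
      · push Not at h3
        have : ∀ s ∈ Set.Ioc 0 V, ker c V s x = - 1 := by
          intro s hs
          unfold ker
          rw [if_neg (by intro h; linarith [h.1, hs.1]), if_pos (by linarith [hs.2])]
          ring
        rw [setIntegral_congr_fun measurableSet_Ioc this]
        simp [hV.le]
        linarith

/-- Averaging over thresholds: some threshold does at least as well as the mean. -/
lemma exists_threshold (μ : Measure ℝ) [IsProbabilityMeasure μ] (c V m : ℝ) (hV : 0 < V)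
    (hsupp : μ (Set.Icc (0:ℝ) 1)ᶜ = 0) (hmean : (∫ x, x ∂μ) = m) :
    ∃ s, 0 < s ∧ s ≤ V ∧ m - c ≤ V * (μ.real (Set.Ioc (c + s) (c + V)) - μ.real (Set.Iio (c - s)))
      + (1 - c) * μ.real (Set.Ioi (c + V)) := by
  have hae : ∀ᵐ x ∂μ, x ∈ Set.Icc (0:ℝ) 1 := hsupp
  have hintprod : Integrable (Function.uncurry (ker c V))
      ((volume.restrict (Set.Ioc 0 V)).prod μ) := by
    apply Integrable.of_bound (ker_meas c V).aestronglyMeasurable 2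
    filter_upwards with p
    exact ker_bdd _ _ _ _
  have hswap := integral_integral_swap hintprod
  have hker : ∀ s, ∫ x, ker c V s x ∂μ =
      μ.real (Set.Ioc (c + s) (c + V)) - μ.real (Set.Iio (c - s)) := by
    intro s
    have e : (fun x => ker c V s x) = fun x => (Set.Ioc (c + s) (c + V)).indicator (fun _ => (1:ℝ)) x
        - (Set.Iio (c - s)).indicator (fun _ => (1:ℝ)) x := by
      ext x; unfold ker; simp [Set.indicator]
    rw [e, integral_sub]
    · rw [integral_indicator measurableSet_Ioc, integral_indicator measurableSet_Iio]
      simp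
    · exact (integrable_const _).indicator measurableSet_Ioc
    · exact (integrable_const _).indicator measurableSet_Iio
  have hL := hintprod.integral_prod_left
  have hR := hintprod.integral_prod_right
  simp only [Function.uncurry] at hL hR
  obtain ⟨s, hs, havg⟩ := exists_setAverage_le (μ := volume) (s := Set.Ioc 0 V)
    (f := fun s => ∫ x, ker c V s x ∂μ) (by simp [hV]) (by simp) hL
  refine ⟨s, hs.1, hs.2, ?_⟩
  rw [setAverage_eq, hker] at havg
  simp only [smul_eq_mul, Measure.real, Real.volume_Ioc, sub_zero,
    ENNReal.toReal_ofReal hV.le] at havg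
  rw [inv_mul_le_iff₀ hV] at havg
  have hident : Integrable (fun x : ℝ => x) μ := by
    apply Integrable.of_bound measurable_id.aestronglyMeasurable 1
    filter_upwards [hae] with x hx
    show ‖x‖ ≤ 1
    rw [Real.norm_eq_abs, abs_le]; exact ⟨by linarith [hx.1], hx.2⟩
  have hI2 : Integrable (fun x => (1 - c) * (if c + V < x then (1:ℝ) else 0)) μ := by
    apply Integrable.const_mul
    have : (fun x => if c + V < x then (1:ℝ) else 0) =
      (Set.Ioi (c + V)).indicator (fun _ => (1:ℝ)) := by ext x; simp [Set.indicator]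
    rw [this]
    exact (integrable_const _).indicator measurableSet_Ioi
  have hineq : ∫ x, (x - c) ∂μ ≤ ∫ x, ((∫ s in Set.Ioc 0 V, ker c V s x) +
      (1 - c) * (if c + V < x then 1 else 0)) ∂μ := by
    apply integral_mono_ae (hident.sub (integrable_const _)) (hR.add hI2)
    filter_upwards [hae] with x hx
    exact ker_int c V x hV hx.2
  rw [integral_add hR hI2, integral_sub hident (integrable_const _), hmean, ← hswap,
    integral_const_mul] at hineq
  have e2 : (∫ x, (if c + V < x then (1:ℝ) else 0) ∂μ) = μ.real (Set.Ioi (c + V)) := by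
    have : (fun x => if c + V < x then (1:ℝ) else 0) =
      (Set.Ioi (c + V)).indicator (fun _ => (1:ℝ)) := by ext x; simp [Set.indicator]
    rw [this, integral_indicator measurableSet_Ioi]
    simp
  rw [e2] at hineq
  simp only [integral_const, probReal_univ, smul_eq_mul, one_mul] at hineq
  simp only [Measure.real] at hineq ⊢
  linarith

lemma event_bound (μ : Measure ℝ) [IsProbabilityMeasure μ] (c V s : ℝ) (hs0 : 0 < s)
    (hV : V = c ∨ V = 1 - c)
    (hsupp : μ (Set.Icc (0:ℝ) 1)ᶜ = 0) :
    (μ.prod μ) {p : ℝ × ℝ | p.1 + p.2 ≤ 2 * c} ≤ ENNReal.ofReal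
      ((μ.real (Set.Iio (c - s)) + μ.real (Set.Icc (c - s) (c + s))) ^ 2 +
       2 * μ.real (Set.Iio (c - s)) * μ.real (Set.Ioc (c + s) (c + V))) := by
  have hae : ∀ᵐ x ∂μ, x ∈ Set.Icc (0:ℝ) 1 := hsupp
  have hae1 : ∀ᵐ p ∂(μ.prod μ), p.1 ∈ Set.Icc (0:ℝ) 1 :=
    Measure.quasiMeasurePreserving_fst.ae hae
  have hae2 : ∀ᵐ p ∂(μ.prod μ), p.2 ∈ Set.Icc (0:ℝ) 1 :=
    Measure.quasiMeasurePreserving_snd.ae hae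
  have hsub : {p : ℝ × ℝ | p.1 + p.2 ≤ 2 * c} ≤ᵐ[μ.prod μ]
      ((Set.Iio (c - s) ∪ Set.Icc (c - s) (c + s)) ×ˢ (Set.Iio (c - s) ∪ Set.Icc (c - s) (c + s))
       ∪ (Set.Iio (c - s) ×ˢ Set.Ioc (c + s) (c + V) ∪
        Set.Ioc (c + s) (c + V) ×ˢ Set.Iio (c - s)) : Set (ℝ × ℝ)) := by
    filter_upwards [hae1, hae2] with p h1 h2 hp
    have hp' : p.1 + p.2 ≤ 2 * c := hp
    obtain ⟨x, y⟩ := p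
    simp only [Set.mem_Icc] at h1 h2 hp'
    change (x, y) ∈ ((Set.Iio (c - s) ∪ Set.Icc (c - s) (c + s)) ×ˢ
      (Set.Iio (c - s) ∪ Set.Icc (c - s) (c + s))
       ∪ (Set.Iio (c - s) ×ˢ Set.Ioc (c + s) (c + V) ∪
        Set.Ioc (c + s) (c + V) ×ˢ Set.Iio (c - s)) : Set (ℝ × ℝ))
    by_cases hx : x ≤ c + s
    · by_cases hy : y ≤ c + s
      · left
        have aux : ∀ u, u ≤ c + s → u ∈ Set.Iio (c - s) ∪ Set.Icc (c - s) (c + s) := by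
          intro u hu
          rcases lt_or_ge u (c - s) with h | h
          · exact Or.inl h
          · exact Or.inr ⟨h, hu⟩
        exact ⟨aux x hx, aux y hy⟩
      · push Not at hy
        right; left
        refine ⟨?_, hy, ?_⟩
        · show x < c - s
          linarith
        · show y ≤ c + V
          rcases hV with h | h <;> rw [h] <;> linarith
    · push Not at hx
      right; right
      refine ⟨⟨hx, ?_⟩, ?_⟩
      · show x ≤ c + V
        rcases hV with h | h <;> rw [h] <;> linarith
      · show y < c - s
        linarith
  refine (measure_mono_ae hsub).trans ((measure_union_le _ _).trans
    ((add_le_add le_rfl (measure_union_le _ _)).trans ?_))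
  simp only [Measure.prod_prod]
  have hu : μ (Set.Iio (c - s) ∪ Set.Icc (c - s) (c + s)) ≤
      ENNReal.ofReal (μ.real (Set.Iio (c - s)) + μ.real (Set.Icc (c - s) (c + s))) := by
    rw [ENNReal.ofReal_add measureReal_nonneg measureReal_nonneg, ofReal_measureReal,
      ofReal_measureReal]
    exact measure_union_le _ _
  rw [ENNReal.ofReal_add (by positivity) (by positivity), sq, ENNReal.ofReal_mul (by positivity)]
  apply add_le_add
  · exact mul_le_mul' hu hu
  · rw [ENNReal.ofReal_mul (by positivity), ENNReal.ofReal_mul (by positivity), ofReal_measureReal,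
      ofReal_measureReal, mul_comm (μ (Set.Ioc _ _))]
    rw [ENNReal.ofReal_ofNat, mul_assoc, two_mul]

lemma upper_pos (m t : ℝ) (hm1 : m < 1) (ht0 : 0 < t) (ht : t < 2 * m)
    (μ : Measure ℝ) [IsProbabilityMeasure μ] (hsupp : μ (Set.Icc (0:ℝ) 1)ᶜ = 0)
    (hmean : (∫ x, x ∂μ) = m) :
    (μ.prod μ) {p : ℝ × ℝ | p.1 + p.2 ≤ t} ≤ ENNReal.ofReal (qVal m t) := by
  have main : ∀ V, 0 < V → (V = t / 2 ∨ V = 1 - t / 2) → (t ≤ 1 → V = t / 2) →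
      (1 < t → V = 1 - t / 2) →
      (μ.prod μ) {p : ℝ × ℝ | p.1 + p.2 ≤ t} ≤ ENNReal.ofReal (qVal m t) := by
    intro V hV hor hle hgt
    obtain ⟨s, hs0, hsV, hs⟩ := exists_threshold μ (t / 2) V m hV hsupp hmean
    have hev := event_bound μ (t / 2) V s hs0 hor hsupp
    rw [show 2 * (t / 2) = t by ring] at hev
    refine hev.trans (ENNReal.ofReal_le_ofReal ?_)
    have htot : μ.real (Set.Iio (t / 2 - s)) + μ.real (Set.Icc (t / 2 - s) (t / 2 + s)) +
        μ.real (Set.Ioc (t / 2 + s) (t / 2 + V)) + μ.real (Set.Ioi (t / 2 + V)) = 1 := by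
      rw [← measureReal_union, ← measureReal_union, ← measureReal_union, ← probReal_univ (μ := μ)]
      · congr 1
        rw [Set.Iio_union_Icc_eq_Iic (by linarith), Set.Iic_union_Ioc_eq_Iic (by linarith),
          Set.Iic_union_Ioi]
      · rw [Set.Iio_union_Icc_eq_Iic (by linarith), Set.Iic_union_Ioc_eq_Iic (by linarith)]
        exact Set.Iic_disjoint_Ioi le_rfl
      · exact measurableSet_Ioi
      · rw [Set.Iio_union_Icc_eq_Iic (by linarith)]
        exact Set.Iic_disjoint_Ioc le_rfl
      · exact measurableSet_Ioc
      · rw [Set.disjoint_left]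
        intro x h1 h2
        exact absurd h1 (not_lt.2 h2.1)
      · exact measurableSet_Icc
    have hD : 0 ≤ μ.real (Set.Ioi (t / 2 + V)) := measureReal_nonneg
    apply alg_q m t _ _ _ hm1 ht0 ht measureReal_nonneg measureReal_nonneg measureReal_nonneg
      (by linarith)
    · intro h
      have e : 1 - (μ.real (Set.Iio (t / 2 - s)) + μ.real (Set.Icc (t / 2 - s) (t / 2 + s)) +
        μ.real (Set.Ioc (t / 2 + s) (t / 2 + V))) = μ.real (Set.Ioi (t / 2 + V)) := by linarith
      rw [e]
      have hVe := hle h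
      rw [hVe] at hs ⊢
      exact hs
    · intro h
      have hVe := hgt h
      have hD0 : μ.real (Set.Ioi (t / 2 + V)) = 0 := by
        rw [measureReal_eq_zero_iff]
        refine measure_mono_null ?_ hsupp
        intro x hx hx'
        have h1 : t / 2 + V < x := hx
        rw [hVe] at h1
        linarith [hx'.2]
      refine ⟨by linarith, ?_⟩
      rw [hD0, mul_zero, add_zero] at hs
      rw [← hVe]
      exact hs
  rcases le_or_gt t 1 with h | h
  · exact main (t / 2) (by linarith) (Or.inl rfl) (fun _ => rfl) (fun h' => absurd h' (not_lt.2 h))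
  · exact main (1 - t / 2) (by linarith) (Or.inr rfl) (fun h' => absurd h (not_lt.2 h'))
      (fun _ => rfl)

lemma upper_zero (m : ℝ) (hm1 : m < 1) 
    (μ : Measure ℝ) [IsProbabilityMeasure μ] (hsupp : μ (Set.Icc (0:ℝ) 1)ᶜ = 0)
    (hmean : (∫ x, x ∂μ) = m) :
    (μ.prod μ) {p : ℝ × ℝ | p.1 + p.2 ≤ 0} ≤ ENNReal.ofReal (qVal m 0) := by
  have hq : qVal m 0 = (1 - m) * (1 - m) := by
    unfold qVal
    norm_num
    ring
  have hae : ∀ᵐ x ∂μ, x ∈ Set.Icc (0:ℝ) 1 := hsupp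
  have hae1 : ∀ᵐ p ∂(μ.prod μ), p.1 ∈ Set.Icc (0:ℝ) 1 :=
    Measure.quasiMeasurePreserving_fst.ae hae
  have hae2 : ∀ᵐ p ∂(μ.prod μ), p.2 ∈ Set.Icc (0:ℝ) 1 :=
    Measure.quasiMeasurePreserving_snd.ae hae
  have hsub : {p : ℝ × ℝ | p.1 + p.2 ≤ 0} ≤ᵐ[μ.prod μ]
      (Set.Iic 0 ×ˢ Set.Iic 0 : Set (ℝ × ℝ)) := by
    filter_upwards [hae1, hae2] with p h1 h2 hp
    have hp' : p.1 + p.2 ≤ 0 := hp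
    exact ⟨by show p.1 ≤ 0; linarith [h2.1], by show p.2 ≤ 0; linarith [h1.1]⟩
  have hident : Integrable (fun x : ℝ => x) μ := by
    apply Integrable.of_bound measurable_id.aestronglyMeasurable 1
    filter_upwards [hae] with x hx
    show ‖x‖ ≤ 1
    rw [Real.norm_eq_abs, abs_le]; exact ⟨by linarith [hx.1], hx.2⟩
  have hA : μ (Set.Iic 0) ≤ ENNReal.ofReal (1 - m) := by
    rw [← ofReal_measureReal]
    apply ENNReal.ofReal_le_ofReal
    have : ∫ x, x ∂μ ≤ ∫ x, (1 - (Set.Iic (0:ℝ)).indicator (fun _ => (1:ℝ)) x) ∂μ := by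
      apply integral_mono_ae hident
        ((integrable_const _).sub ((integrable_const _).indicator measurableSet_Iic))
      filter_upwards [hae] with x hx
      by_cases h : x ≤ 0
      · simp [h]
      · simp [h, hx.2]
    rw [integral_sub (integrable_const _) ((integrable_const _).indicator measurableSet_Iic),
      integral_indicator measurableSet_Iic, hmean] at this
    simp at this
    linarith
  refine (measure_mono_ae hsub).trans ?_
  rw [Measure.prod_prod, hq, ENNReal.ofReal_mul (by linarith)]
  exact mul_le_mul' hA hA

/-- The complete solution of the `n = 2` problem: every probability measure on `[0,1]`
with mean `m` satisfies `P(X₁ + X₂ ≤ t) ≤ q(m,t)`, and `p(m,t) = q(m,t)`. -/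
theorem stmt_19 (m t : ℝ) (hm0 : 0 < m) (hm1 : m < 1) (ht0 : 0 ≤ t) (ht : t < 2 * m) :
    (∀ μ : Measure ℝ, IsProbabilityMeasure μ → μ (Set.Icc (0:ℝ) 1)ᶜ = 0 →
      (∫ x, x ∂μ) = m →
      (μ.prod μ) {p : ℝ × ℝ | p.1 + p.2 ≤ t} ≤ ENNReal.ofReal (qVal m t)) ∧
    pSup2 m t = ENNReal.ofReal (qVal m t) := by
  have hup : ∀ μ : Measure ℝ, IsProbabilityMeasure μ → μ (Set.Icc (0:ℝ) 1)ᶜ = 0 →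
      (∫ x, x ∂μ) = m →
      (μ.prod μ) {p : ℝ × ℝ | p.1 + p.2 ≤ t} ≤ ENNReal.ofReal (qVal m t) := by
    intro μ hμ hsupp hmean
    rcases ht0.lt_or_eq with h | h
    · exact upper_pos m t hm1 h ht μ hsupp hmean
    · subst h
      exact upper_zero m hm1 μ hsupp hmean
  refine ⟨hup, le_antisymm ?_ (lower m t hm0 hm1 ht0 ht)⟩
  unfold pSup2
  exact iSup₂_le fun μ h => hup μ h.1 h.2.1 h.2.2
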